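/- arXiv:1209.1943 — 5 statements merged into one kernel-verified Lean document; each statement's English description precedes it below -/
import Mathlib

section
/- Assume the family S satisfies: for all i, j ∈ ι, if S i ≠ S j then ((S i \ S j) ∪ (S j \ S i)) ∩ D* ≠ ∅. Then for every collection 𝒜 ⊆ Set D and every i ∈ ι: S i ∈ 𝒜 if and only if (S i ∩ D*) ∈ 𝒜↓. -/
/-- The level-2 relativization of a collection `𝒜` of subsets of `D`, with respect to the
finite universe `Dstar` and the family `S` of values of the relevant sort-1 variables. -/
def rel2 {D ι : Type*} (Dstar : Set D) (S : ι → Set D) (𝒜 : Set (Set D)) : Set (Set D) :=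
  ((𝒜 ∩ {A | A ⊆ Dstar}) \ {B | ∃ i : ι, B = S i ∩ Dstar}) ∪
    {B | ∃ i : ι, S i ∈ 𝒜 ∧ B = S i ∩ Dstar}

theorem stmt_1 {D ι : Type*} (Dstar : Set D) (S : ι → Set D)
    (hS : ∀ i j : ι, S i ≠ S j → (((S i \ S j) ∪ (S j \ S i)) ∩ Dstar).Nonempty)
    (𝒜 : Set (Set D)) (i : ι) :
    S i ∈ 𝒜 ↔ (S i ∩ Dstar) ∈ rel2 Dstar S 𝒜 := by
  constructor
  · exact fun h => Or.inr ⟨i, h, rfl⟩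
  · rintro (⟨-, h⟩ | ⟨j, hj, h⟩)
    · exact absurd ⟨i, rfl⟩ h
    · -- Equal traces on `Dstar` force `S i = S j`, as distinct members differ inside `Dstar`.
      by_contra hi
      have hne : S i ≠ S j := fun e => hi (e ▸ hj)
      obtain ⟨x, hx | hx, hxD⟩ := hS i j hne
      · exact hx.2 (h.subset ⟨hx.1, hxD⟩).1
      · exact hx.2 (h.superset ⟨hx.1, hxD⟩).1
end

section
/- Assume the family S satisfies: for all i, j ∈ ι, if S i ≠ S j then ((S i \ S j) ∪ (S j \ S i)) ∩ D* ≠ ∅. Let x, y ∈ D*, and assume that for every k ∈ κ, if T k ≠ ⟨x,y⟩ then there exists i ∈ ι with S i ∈ ((T k \ ⟨x,y⟩) ∪ (⟨x,y⟩ \ T k)), S i ∩ D* ≠ ∅, and moreover if S i ∈ T k then S i ∩ D* ≠ {x} and S i ∩ D* ≠ {x, y}. Then for every 𝔄 ⊆ Set (Set D): ⟨x,y⟩ ∈ 𝔄 if and only if ⟨x,y⟩ ∈ 𝔄↓. -/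
/-- The level-3 relativization of a collection `𝔄` of collections of subsets of `D`,
with respect to `Dstar`, the sort-1 family `S` and the sort-2 family `T`. -/
def rel3 {D ι κ : Type*} (Dstar : Set D) (S : ι → Set D) (T : κ → Set (Set D))
    (𝔄 : Set (Set (Set D))) : Set (Set (Set D)) :=
  ((𝔄 ∩ {𝒜 | ∀ A ∈ 𝒜, A ⊆ Dstar}) \ {ℬ | ∃ k : κ, ℬ = rel2 Dstar S (T k)}) ∪
    {ℬ | ∃ k : κ, T k ∈ 𝔄 ∧ ℬ = rel2 Dstar S (T k)}

/-- The Kuratowski pair `⟨x,y⟩ = {{x}, {x,y}}`, as a collection of subsets of `D`. -/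
def kpair {D : Type*} (x y : D) : Set (Set D) := {{x}, {x, y}}

/-- Equality of traces on `Dstar` determines the values `S i`, by the distinguishing hypothesis. -/
lemma eq_of_inter_eq {D ι : Type*} {Dstar : Set D} {S : ι → Set D}
    (hS : ∀ i j : ι, S i ≠ S j → (((S i \ S j) ∪ (S j \ S i)) ∩ Dstar).Nonempty)
    {i j : ι} (h : S i ∩ Dstar = S j ∩ Dstar) : S i = S j := by
  by_contra hne
  obtain ⟨z, hz, hzD⟩ := hS i j hne
  have hiff : z ∈ S i ∩ Dstar ↔ z ∈ S j ∩ Dstar := by rw [h]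
  rcases hz with ⟨h1, h2⟩ | ⟨h1, h2⟩
  · exact h2 (hiff.1 ⟨h1, hzD⟩).1
  · exact h2 (hiff.2 ⟨h1, hzD⟩).1

lemma subset_of_mem_kpair {D : Type*} {Dstar : Set D} {x y : D} (hx : x ∈ Dstar)
    (hy : y ∈ Dstar) {A : Set D} (hA : A ∈ kpair x y) : A ⊆ Dstar := by
  rcases hA with rfl | rfl
  · exact Set.singleton_subset_iff.2 hx
  · exact Set.pair_subset hx hy

/-- A collection that relativizes to `kpair x y` is `kpair x y`, provided that, if it were
different, some `S i` would witness the difference. -/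
lemma eq_kpair_of_rel2_eq_kpair {D ι : Type*} {Dstar : Set D} {S : ι → Set D}
    (hS : ∀ i j : ι, S i ≠ S j → (((S i \ S j) ∪ (S j \ S i)) ∩ Dstar).Nonempty)
    {x y : D} (hx : x ∈ Dstar) (hy : y ∈ Dstar) {𝒜 : Set (Set D)}
    (hT : 𝒜 ≠ kpair x y → ∃ i : ι, S i ∈ ((𝒜 \ kpair x y) ∪ (kpair x y \ 𝒜)) ∧
      (S i ∈ 𝒜 → S i ∩ Dstar ≠ {x} ∧ S i ∩ Dstar ≠ {x, y}))
    (h : kpair x y = rel2 Dstar S 𝒜) : 𝒜 = kpair x y := by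
  by_contra hne
  obtain ⟨i, ⟨hi, -⟩ | ⟨hi, hi'⟩, hxy⟩ := hT hne
  · have hmem : S i ∩ Dstar ∈ kpair x y := h ▸ Or.inr ⟨i, hi, rfl⟩
    exact hmem.elim (hxy hi).1 (hxy hi).2
  · -- `S i` is its own trace, so it can enter `rel2` only through some `S j ∈ 𝒜` with equal trace.
    have htr : S i = S i ∩ Dstar :=
      (Set.inter_eq_left.2 (subset_of_mem_kpair hx hy hi)).symm
    have hmem : S i ∈ rel2 Dstar S 𝒜 := h ▸ hi
    rcases hmem with ⟨-, hn⟩ | ⟨j, hj, hij⟩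
    · exact hn ⟨i, htr⟩
    · exact hi' (eq_of_inter_eq hS (htr.symm.trans hij) ▸ hj)

theorem stmt_4 {D ι κ : Type*} (Dstar : Set D) (S : ι → Set D) (T : κ → Set (Set D))
    (hS : ∀ i j : ι, S i ≠ S j → (((S i \ S j) ∪ (S j \ S i)) ∩ Dstar).Nonempty)
    (x y : D) (hx : x ∈ Dstar) (hy : y ∈ Dstar)
    (hT : ∀ k : κ, T k ≠ kpair x y → ∃ i : ι,
      S i ∈ ((T k \ kpair x y) ∪ (kpair x y \ T k)) ∧ (S i ∩ Dstar).Nonempty ∧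
        (S i ∈ T k → S i ∩ Dstar ≠ {x} ∧ S i ∩ Dstar ≠ {x, y}))
    (𝔄 : Set (Set (Set D))) :
    kpair x y ∈ 𝔄 ↔ kpair x y ∈ rel3 Dstar S T 𝔄 := by
  have key : ∀ k, kpair x y = rel2 Dstar S (T k) → T k = kpair x y := fun k =>
    eq_kpair_of_rel2_eq_kpair hS hx hy fun hne =>
      let ⟨i, hi, _, hxy⟩ := hT k hne
      ⟨i, hi, hxy⟩
  constructor
  · intro h
    by_cases hk : ∃ k, kpair x y = rel2 Dstar S (T k)
    · obtain ⟨k, hk⟩ := hk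
      exact Or.inr ⟨k, (key k hk).symm ▸ h, hk⟩
    · exact Or.inl ⟨⟨h, fun A hA => subset_of_mem_kpair hx hy hA⟩, hk⟩
  · rintro (⟨⟨h, -⟩, -⟩ | ⟨k, hk, heq⟩)
    · exact h
    · exact key k heq ▸ hk
end

section
/- Assume: (A) for all i, j ∈ ι, if S i ≠ S j then ((S i \ S j) ∪ (S j \ S i)) ∩ D* ≠ ∅; (B) for all k, k' ∈ κ, if T k ≠ T k' then there exists i ∈ ι with S i ∈ ((T k \ T k') ∪ (T k' \ T k)) and S i ∩ D* ≠ ∅; (C) for all x, y ∈ D* and all k ∈ κ, if T k ≠ ⟨x,y⟩ then there exists i ∈ ι with S i ∈ ((T k \ ⟨x,y⟩) ∪ (⟨x,y⟩ \ T k)), S i ∩ D* ≠ ∅, and moreover if S i ∈ T k then S i ∩ D* ≠ {x} and S i ∩ D* ≠ {x, y}. Then for every 𝔄 ⊆ Set (Set D) and every k ∈ κ: T k ∈ 𝔄 if and only if (T k)↓ ∈ 𝔄↓. -/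
/-- If distinct members of the family `S` already differ on `Dstar`, then relativization preserves
and reflects membership of the `S i`: the first part of `rel2` contains no trace `S i ∩ Dstar`, and
in the second part the trace determines the set. -/
theorem inter_mem_rel2_iff {D ι : Type*} {Dstar : Set D} {S : ι → Set D}
    (hA : ∀ i j : ι, S i ≠ S j → (((S i \ S j) ∪ (S j \ S i)) ∩ Dstar).Nonempty)
    (𝒜 : Set (Set D)) (i : ι) :
    S i ∩ Dstar ∈ rel2 Dstar S 𝒜 ↔ S i ∈ 𝒜 := by
  constructor
  · rintro (⟨-, h⟩ | ⟨j, hj, hij⟩)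
    · exact absurd ⟨i, rfl⟩ h
    · by_cases hS : S i = S j
      · rwa [hS]
      · obtain ⟨x, hx, hxD⟩ := hA i j hS
        have hmem : x ∈ S i ∩ Dstar ↔ x ∈ S j ∩ Dstar := by rw [hij]
        rcases hx with ⟨h₁, h₂⟩ | ⟨h₁, h₂⟩
        · exact absurd (hmem.1 ⟨h₁, hxD⟩).1 h₂
        · exact absurd (hmem.2 ⟨h₁, hxD⟩).1 h₂
  · exact fun h => Or.inr ⟨i, h, rfl⟩

theorem stmt_5 {D ι κ : Type*} (Dstar : Set D) (S : ι → Set D) (T : κ → Set (Set D))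
    (hA : ∀ i j : ι, S i ≠ S j → (((S i \ S j) ∪ (S j \ S i)) ∩ Dstar).Nonempty)
    (hB : ∀ k k' : κ, T k ≠ T k' → ∃ i : ι,
      S i ∈ ((T k \ T k') ∪ (T k' \ T k)) ∧ (S i ∩ Dstar).Nonempty)
    (hC : ∀ x ∈ Dstar, ∀ y ∈ Dstar, ∀ k : κ, T k ≠ kpair x y → ∃ i : ι,
      S i ∈ ((T k \ kpair x y) ∪ (kpair x y \ T k)) ∧ (S i ∩ Dstar).Nonempty ∧
        (S i ∈ T k → S i ∩ Dstar ≠ {x} ∧ S i ∩ Dstar ≠ ({x, y} : Set D)))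
    (𝔄 : Set (Set (Set D))) (k : κ) :
    T k ∈ 𝔄 ↔ rel2 Dstar S (T k) ∈ rel3 Dstar S T 𝔄 := by
  constructor
  · exact fun h => Or.inr ⟨k, h, rfl⟩
  · rintro (⟨-, h⟩ | ⟨k', hk', hkk'⟩)
    · exact absurd ⟨k, rfl⟩ h
    · by_cases hT : T k = T k'
      · rwa [hT]
      -- Some `S i` separates `T k` from `T k'`, so its trace separates their relativizations.
      · obtain ⟨i, hi, -⟩ := hB k k' hT
        have hmem : S i ∈ T k ↔ S i ∈ T k' := by
          rw [← inter_mem_rel2_iff hA, hkk', inter_mem_rel2_iff hA]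
        rcases hi with ⟨h₁, h₂⟩ | ⟨h₁, h₂⟩
        · exact absurd (hmem.1 h₁) h₂
        · exact absurd (hmem.2 h₁) h₂
end

section
/- Let Z¹₁, …, Z¹ₘ ∈ V₁ \ W₁ be pairwise distinct sort-1 variables and let U¹₁, …, U¹ₘ be subsets of D* such that no U¹ⱼ belongs to {M X¹ ∩ D* : X¹ ∈ W₁}. Then Rel(M[Z¹₁/U¹₁, …, Z¹ₘ/U¹ₘ], D*, d*, W₁ ∪ {Z¹₁, …, Z¹ₘ}, W₂) = (Rel(M, D*, d*, W₁, W₂))[Z¹₁/U¹₁, …, Z¹ₘ/U¹ₘ]. -/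
/-!
Relativization uses the sort-1 assignment in two ways: pointwise through `M X ∩ D*`, and through
the set `{M* Y : Y ∈ W₁}` of designated values. On sort 1 the claim is therefore `U j ∩ D* = U j`.
On sort 2, updating at the `Z j` and adjoining them to `W₁` removes the sets `U j` from
`M X ∩ 𝒫(D*)` and puts back exactly those that belong to `M X`. Since `U j ⊆ D*` is distinct from
every `M* Y` with `Y ∈ W₁`, this has no effect: each `U j` was already kept by the original
relativization exactly when it belongs to `M X` (`relv2_eq_of_update`). On sort 3 only the
sort-2 relativizations and `W₂` enter, so that case follows from sort 2.
-/

universe u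

/-- A 4LQS-interpretation with domain `D`: it assigns to the (ℕ-indexed) variables of sort 0
elements of `D`, to sort-1 variables subsets of `D`, to sort-2 variables collections of
subsets of `D`, and to sort-3 variables collections of collections of subsets of `D`. -/
structure Interp (D : Type u) where
  v0 : ℕ → D
  v1 : ℕ → Set D
  v2 : ℕ → Set (Set D)
  v3 : ℕ → Set (Set (Set D))

namespace Interp

variable {D : Type u}

/-- `M[x/u]`: update of a sort-0 variable. -/
def upd0 (M : Interp D) (z : ℕ) (u : D) : Interp D :=
  { M with v0 := Function.update M.v0 z u }

/-- Update of a sort-1 variable. -/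
def upd1 (M : Interp D) (Z : ℕ) (U : Set D) : Interp D :=
  { M with v1 := Function.update M.v1 Z U }

/-- Update of a sort-2 variable. -/
def upd2 (M : Interp D) (Z : ℕ) (U : Set (Set D)) : Interp D :=
  { M with v2 := Function.update M.v2 Z U }

/-- Simultaneous update `M[z₁/u₁,…,zₙ/uₙ]` of a list of sort-0 variables (for pairwise
distinct variables the iterated update is the simultaneous one). -/
def upd0L (M : Interp D) (zs : List ℕ) (us : List D) : Interp D :=
  (zs.zip us).foldl (fun N p => N.upd0 p.1 p.2) M

/-- Simultaneous update of a list of sort-1 variables. -/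
def upd1L (M : Interp D) (Zs : List ℕ) (Us : List (Set D)) : Interp D :=
  (Zs.zip Us).foldl (fun N p => N.upd1 p.1 p.2) M

/-- Simultaneous update of a list of sort-2 variables. -/
def upd2L (M : Interp D) (Zs : List ℕ) (Us : List (Set (Set D))) : Interp D :=
  (Zs.zip Us).foldl (fun N p => N.upd2 p.1 p.2) M

end Interp

/-- Relativization of a sort-2 value `𝒜` with respect to `Dstar` and the set `W1` of
designated sort-1 variables:
`((𝒜 ∩ 𝒫(D*)) \ {M* Y¹ : Y¹ ∈ W₁}) ∪ {M* Y¹ : Y¹ ∈ W₁, M Y¹ ∈ 𝒜}`. -/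
def relv2 {D : Type u} (M : Interp D) (Dstar : Set D) (W1 : Set ℕ)
    (𝒜 : Set (Set D)) : Set (Set D) :=
  ((𝒜 ∩ {A | A ⊆ Dstar}) \ {B | ∃ Y ∈ W1, B = M.v1 Y ∩ Dstar}) ∪
    {B | ∃ Y ∈ W1, M.v1 Y ∈ 𝒜 ∧ B = M.v1 Y ∩ Dstar}

/-- Relativization of a sort-3 value `𝔄` with respect to `Dstar`, `W1` and the set `W2` of
designated sort-2 variables. -/
def relv3 {D : Type u} (M : Interp D) (Dstar : Set D) (W1 W2 : Set ℕ)
    (𝔄 : Set (Set (Set D))) : Set (Set (Set D)) :=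
  ((𝔄 ∩ {𝒜 | ∀ A ∈ 𝒜, A ⊆ Dstar}) \ {ℬ | ∃ Y ∈ W2, ℬ = relv2 M Dstar W1 (M.v2 Y)}) ∪
    {ℬ | ∃ Y ∈ W2, M.v2 Y ∈ 𝔄 ∧ ℬ = relv2 M Dstar W1 (M.v2 Y)}

open Classical in
/-- The relativized interpretation `M* = Rel(M, D*, d*, W₁, W₂)`. -/
noncomputable def relInterp {D : Type u} (M : Interp D) (Dstar : Set D) (dstar : D)
    (W1 W2 : Set ℕ) : Interp D where
  v0 x := if M.v0 x ∈ Dstar then M.v0 x else dstar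
  v1 X := M.v1 X ∩ Dstar
  v2 X := relv2 M Dstar W1 (M.v2 X)
  v3 X := relv3 M Dstar W1 W2 (M.v3 X)

namespace Interp

variable {D : Type u}

theorem upd1L_v0 (M : Interp D) (Zs : List ℕ) (Us : List (Set D)) :
    (M.upd1L Zs Us).v0 = M.v0 := by
  unfold upd1L
  induction Zs.zip Us generalizing M with
  | nil => rfl
  | cons p l ih => exact ih (M.upd1 p.1 p.2)

theorem upd1L_v2 (M : Interp D) (Zs : List ℕ) (Us : List (Set D)) :
    (M.upd1L Zs Us).v2 = M.v2 := by
  unfold upd1L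
  induction Zs.zip Us generalizing M with
  | nil => rfl
  | cons p l ih => exact ih (M.upd1 p.1 p.2)

theorem upd1L_v3 (M : Interp D) (Zs : List ℕ) (Us : List (Set D)) :
    (M.upd1L Zs Us).v3 = M.v3 := by
  unfold upd1L
  induction Zs.zip Us generalizing M with
  | nil => rfl
  | cons p l ih => exact ih (M.upd1 p.1 p.2)

theorem upd1L_ofFn_succ (M : Interp D) {m : ℕ} (Z : Fin (m + 1) → ℕ) (U : Fin (m + 1) → Set D) :
    M.upd1L (List.ofFn Z) (List.ofFn U) =
      (M.upd1 (Z 0) (U 0)).upd1L (List.ofFn fun j => Z j.succ) (List.ofFn fun j => U j.succ) := by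
  simp [upd1L, List.ofFn_succ]

theorem upd1L_v1_of_notMem (M : Interp D) {m : ℕ} (Z : Fin m → ℕ) (U : Fin m → Set D) (X : ℕ)
    (hX : ∀ j, X ≠ Z j) : (M.upd1L (List.ofFn Z) (List.ofFn U)).v1 X = M.v1 X := by
  induction m generalizing M with
  | zero => simp [upd1L]
  | succ m ih =>
    rw [upd1L_ofFn_succ, ih _ _ _ fun j => hX j.succ]
    exact Function.update_of_ne (hX 0) _ _

theorem upd1L_v1_apply (M : Interp D) {m : ℕ} (Z : Fin m → ℕ) (hZ : Function.Injective Z)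
    (U : Fin m → Set D) (j : Fin m) :
    (M.upd1L (List.ofFn Z) (List.ofFn U)).v1 (Z j) = U j := by
  induction m generalizing M with
  | zero => exact j.elim0
  | succ m ih =>
    rw [upd1L_ofFn_succ]
    cases j using Fin.cases with
    | zero =>
      -- the later updates are at variables other than `Z 0`
      rw [upd1L_v1_of_notMem _ _ _ _ fun j h => (Fin.succ_ne_zero j) (hZ h).symm]
      exact Function.update_self _ _ _
    | succ i => exact ih _ (fun j => Z j.succ) (hZ.comp (Fin.succ_injective m)) _ i

end Interp

/-- If `N` agrees with `M` on `W1` and takes at the `Z j` values `U j ⊆ D*` that are not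
relativized `W1`-values of `M`, then designating the `Z j` as well does not change the
relativization of sort-2 values. -/
theorem relv2_eq_of_update {D : Type u} {ι : Type*} (M N : Interp D) (Dstar : Set D) (W1 : Set ℕ)
    (Z : ι → ℕ) (U : ι → Set D) (hUsub : ∀ j, U j ⊆ Dstar)
    (hUnew : ∀ j, ¬ ∃ X ∈ W1, U j = M.v1 X ∩ Dstar)
    (hW : ∀ Y ∈ W1, N.v1 Y = M.v1 Y) (hZ : ∀ j, N.v1 (Z j) = U j) (𝒜 : Set (Set D)) :
    relv2 N Dstar (W1 ∪ Set.range Z) 𝒜 = relv2 M Dstar W1 𝒜 := by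
  have hUint : ∀ j, U j ∩ Dstar = U j := fun j => Set.inter_eq_left.2 (hUsub j)
  ext B
  constructor
  · rintro (⟨hB, hn⟩ | ⟨Y, hY | ⟨j, rfl⟩, hA, rfl⟩)
    · refine Or.inl ⟨hB, ?_⟩
      rintro ⟨Y, hY, rfl⟩
      exact hn ⟨Y, Or.inl hY, by rw [hW Y hY]⟩
    · rw [hW Y hY] at hA ⊢
      exact Or.inr ⟨Y, hY, hA, rfl⟩
    · rw [hZ] at hA ⊢
      rw [hUint]
      exact Or.inl ⟨⟨hA, hUsub j⟩, hUnew j⟩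
  · rintro (⟨hB, hn⟩ | ⟨Y, hY, hA, rfl⟩)
    · by_cases hBU : ∃ j, B = U j
      · obtain ⟨j, rfl⟩ := hBU
        exact Or.inr ⟨Z j, Or.inr ⟨j, rfl⟩, by rw [hZ]; exact hB.1, by rw [hZ, hUint]⟩
      · refine Or.inl ⟨hB, ?_⟩
        rintro ⟨Y, hY | ⟨j, rfl⟩, rfl⟩
        · exact hn ⟨Y, hY, by rw [hW Y hY]⟩
        · exact hBU ⟨j, by rw [hZ, hUint]⟩
    · exact Or.inr ⟨Y, Or.inl hY, by rwa [hW Y hY], by rw [hW Y hY]⟩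

theorem stmt_8 {D : Type u} [Nonempty D] (M : Interp D) (Dstar : Set D) (dstar : D)
    (hd : dstar ∈ Dstar) (W1 W2 : Set ℕ)
    {m : ℕ} (Z : Fin m → ℕ) (hZinj : Function.Injective Z) (hZW : ∀ j, Z j ∉ W1)
    (U : Fin m → Set D) (hUsub : ∀ j, U j ⊆ Dstar)
    (hUnew : ∀ j, ¬ ∃ X ∈ W1, U j = M.v1 X ∩ Dstar) :
    relInterp (M.upd1L (List.ofFn Z) (List.ofFn U)) Dstar dstar (W1 ∪ Set.range Z) W2 =
      (relInterp M Dstar dstar W1 W2).upd1L (List.ofFn Z) (List.ofFn U) := by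
  have hrel := relv2_eq_of_update M (M.upd1L (List.ofFn Z) (List.ofFn U)) Dstar W1 Z U hUsub hUnew
    (fun Y hY => M.upd1L_v1_of_notMem Z U Y fun j h => hZW j (h ▸ hY))
    (M.upd1L_v1_apply Z hZinj U)
  have ext4 : ∀ {A B : Interp D}, A.v0 = B.v0 → A.v1 = B.v1 → A.v2 = B.v2 → A.v3 = B.v3 →
      A = B := by
    rintro ⟨⟩ ⟨⟩ rfl rfl rfl rfl
    rfl
  apply ext4
  · rw [Interp.upd1L_v0]
    unfold relInterp
    dsimp only
    rw [Interp.upd1L_v0]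
  · funext X
    by_cases hX : ∃ j, X = Z j
    · obtain ⟨j, rfl⟩ := hX
      rw [Interp.upd1L_v1_apply _ Z hZinj]
      change (M.upd1L _ _).v1 (Z j) ∩ Dstar = U j
      rw [Interp.upd1L_v1_apply _ Z hZinj, Set.inter_eq_left.2 (hUsub j)]
    · have hX' : ∀ j, X ≠ Z j := fun j h => hX ⟨j, h⟩
      rw [Interp.upd1L_v1_of_notMem _ Z U X hX']
      change (M.upd1L _ _).v1 X ∩ Dstar = M.v1 X ∩ Dstar
      rw [Interp.upd1L_v1_of_notMem _ Z U X hX']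
  · simp only [relInterp, Interp.upd1L_v2, hrel]
  · simp only [relInterp, relv3, Interp.upd1L_v2, Interp.upd1L_v3, hrel]
end

section
/- Let D be a type and let 𝒮 be a finite family of pairwise distinct subsets of D with 𝒮 nonempty. Then there exists a finite set F ⊆ D with |F| ≤ |𝒮| − 1 such that for all distinct K, K' ∈ 𝒮, K ∩ F ≠ K' ∩ F. -/
/-!
Induction on the family, one member `A` at a time. If `F` distinguishes `𝒮`, then at most one
`K₀ ∈ 𝒮` has the same trace on `F` as `A`. If there is one, adding to `F` a single point on which
`A` and `K₀` differ separates them, and enlarging `F` keeps all other pairs separated. The first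
member costs no point, whence the bound `|𝒮| - 1`.
-/

theorem stmt_17 {D : Type*} (𝒮 : Set (Set D)) (hfin : 𝒮.Finite) (hne : 𝒮.Nonempty) :
    ∃ F : Set D, F.Finite ∧ F.ncard ≤ 𝒮.ncard - 1 ∧
      ∀ K ∈ 𝒮, ∀ K' ∈ 𝒮, K ≠ K' → K ∩ F ≠ K' ∩ F := by
  -- With truncated subtraction the claim also holds for the empty family, which starts the induction.
  clear hne
  induction 𝒮, hfin using Set.Finite.induction_on with
  | empty => exact ⟨∅, Set.finite_empty, by simp, by simp⟩
  | @insert A 𝒯 hA hT ih =>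
    obtain ⟨F, hF, hcard, hdist⟩ := ih
    have hins : (insert A 𝒯).ncard = 𝒯.ncard + 1 := Set.ncard_insert_of_notMem hA hT
    by_cases h : ∃ K₀ ∈ 𝒯, K₀ ∩ F = A ∩ F
    · obtain ⟨K₀, hK₀, hEq⟩ := h
      have hpos : 0 < 𝒯.ncard := (Set.ncard_pos hT).2 ⟨K₀, hK₀⟩
      obtain ⟨x, hx⟩ : ∃ x, ¬(x ∈ K₀ ↔ x ∈ A) := by
        by_contra! hall
        exact hA (Set.ext hall ▸ hK₀)
      have hmono : ∀ K K' : Set D, K ∩ insert x F = K' ∩ insert x F →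
          K ∩ F = K' ∩ F ∧ (x ∈ K ↔ x ∈ K') := by
        intro K K' hKK
        simp only [Set.ext_iff, Set.mem_inter_iff, Set.mem_insert_iff] at hKK ⊢
        grind
      -- A member of `𝒯` with the trace of `A` on `F` must be `K₀`, which `x` separates from `A`.
      have hnew : ∀ K ∈ 𝒯, K ∩ insert x F ≠ A ∩ insert x F := by
        intro K hK hKA
        obtain ⟨h1, h2⟩ := hmono K A hKA
        have hKK₀ : K = K₀ := by
          by_contra hn
          exact hdist K hK K₀ hK₀ hn (h1.trans hEq.symm)
        exact hx (hKK₀ ▸ h2)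
      refine ⟨insert x F, hF.insert x, ?_, ?_⟩
      · have := Set.ncard_insert_le x F
        omega
      · rintro K (rfl | hK) K' (rfl | hK') hne hKK
        · exact hne rfl
        · exact hnew K' hK' hKK.symm
        · exact hnew K hK hKK
        · exact hdist K hK K' hK' hne (hmono K K' hKK).1
    · push Not at h
      refine ⟨F, hF, by omega, ?_⟩
      rintro K (rfl | hK) K' (rfl | hK') hne hKK
      · exact hne rfl
      · exact h K' hK' hKK.symm
      · exact h K hK hKK
      · exact hdist K hK K' hK' hne hKK
end
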